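/- If (α, β) is an admissible pair, then the pull-in voltage λ*(α,β) is finite: λ*(α,β) < +∞. -/

import Mathlib

open MeasureTheory Metric Set Filter

/-- The Laplacian of `u : ℝ^N → ℝ`, as the sum of pure second partial derivatives. -/
noncomputable def lap {N : ℕ} (u : EuclideanSpace ℝ (Fin N) → ℝ) (x : EuclideanSpace ℝ (Fin N)) : ℝ :=
  ∑ i : Fin N, fderiv ℝ (fun y => fderiv ℝ u y (EuclideanSpace.single i 1)) x
    (EuclideanSpace.single i 1)

/-- The biharmonic operator `Δ²`. -/
noncomputable def biharm {N : ℕ} (u : EuclideanSpace ℝ (Fin N) → ℝ)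
    (x : EuclideanSpace ℝ (Fin N)) : ℝ :=
  lap (lap u) x

/-- `Φ(x) = (α - β/2) + (β/2)|x|²`, the biharmonic extension of the boundary data `(α, β)`. -/
noncomputable def Phi {N : ℕ} (α β : ℝ) (x : EuclideanSpace ℝ (Fin N)) : ℝ :=
  (α - β / 2) + (β / 2) * ‖x‖ ^ 2

/-- A pair `(α, β)` is admissible if `β ≤ 0` and `α - β/2 < 1`. -/
def Admissible (α β : ℝ) : Prop := β ≤ 0 ∧ α - β / 2 < 1

/-- Test functions: `φ ∈ C⁴(B̄)` with `φ = 0` and `∇φ = 0` on `∂B`. -/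
def IsTest (N : ℕ) (φ : EuclideanSpace ℝ (Fin N) → ℝ) : Prop :=
  ContDiffOn ℝ 4 φ (closedBall (0 : EuclideanSpace ℝ (Fin N)) 1) ∧
    (∀ x : EuclideanSpace ℝ (Fin N), ‖x‖ = 1 → φ x = 0) ∧
    (∀ x : EuclideanSpace ℝ (Fin N), ‖x‖ = 1 →
      fderivWithin ℝ φ (closedBall (0 : EuclideanSpace ℝ (Fin N)) 1) x = 0)

/-- A weak solution of `(P)_{λ,α,β}` on the unit ball. -/
def IsWeakSolutionAB (N : ℕ) (lam α β : ℝ) (u : EuclideanSpace ℝ (Fin N) → ℝ) : Prop :=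
  (∀ᵐ x ∂(volume.restrict (ball (0 : EuclideanSpace ℝ (Fin N)) 1)), α ≤ u x ∧ u x ≤ 1) ∧
    IntegrableOn (fun x => ((1 - u x) ^ 2)⁻¹) (ball (0 : EuclideanSpace ℝ (Fin N)) 1) ∧
    ∀ φ : EuclideanSpace ℝ (Fin N) → ℝ, IsTest N φ →
      ∫ x in ball (0 : EuclideanSpace ℝ (Fin N)) 1, (u x - Phi α β x) * biharm φ x =
        lam * ∫ x in ball (0 : EuclideanSpace ℝ (Fin N)) 1, φ x / (1 - u x) ^ 2

/-- A weak super-solution of `(P)_{λ,α,β}` on the unit ball. -/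
def IsWeakSuperSolutionAB (N : ℕ) (lam α β : ℝ) (u : EuclideanSpace ℝ (Fin N) → ℝ) : Prop :=
  (∀ᵐ x ∂(volume.restrict (ball (0 : EuclideanSpace ℝ (Fin N)) 1)), α ≤ u x ∧ u x ≤ 1) ∧
    IntegrableOn (fun x => ((1 - u x) ^ 2)⁻¹) (ball (0 : EuclideanSpace ℝ (Fin N)) 1) ∧
    ∀ φ : EuclideanSpace ℝ (Fin N) → ℝ, IsTest N φ →
      (∀ x ∈ closedBall (0 : EuclideanSpace ℝ (Fin N)) 1, 0 ≤ φ x) →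
      ∫ x in ball (0 : EuclideanSpace ℝ (Fin N)) 1, (u x - Phi α β x) * biharm φ x ≥
        lam * ∫ x in ball (0 : EuclideanSpace ℝ (Fin N)) 1, φ x / (1 - u x) ^ 2

/-- A classical solution of `(P)_{λ,α,β}` on the unit ball: `u ∈ C⁴(B̄)`, `α < u < 1` in `B`,
`Δ²u = λ(1-u)⁻²` in `B`, and `u = α`, `∂_ν u = β` on `∂B`. -/
structure IsClassicalSolutionAB (N : ℕ) (lam α β : ℝ)
    (u : EuclideanSpace ℝ (Fin N) → ℝ) : Prop where
  contDiffOn : ContDiffOn ℝ 4 u (closedBall (0 : EuclideanSpace ℝ (Fin N)) 1)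
  gt_alpha : ∀ x ∈ ball (0 : EuclideanSpace ℝ (Fin N)) 1, α < u x
  lt_one : ∀ x ∈ ball (0 : EuclideanSpace ℝ (Fin N)) 1, u x < 1
  eqn : ∀ x ∈ ball (0 : EuclideanSpace ℝ (Fin N)) 1, biharm u x = lam / (1 - u x) ^ 2
  bdry : ∀ x : EuclideanSpace ℝ (Fin N), ‖x‖ = 1 → u x = α
  bdry_deriv : ∀ x : EuclideanSpace ℝ (Fin N), ‖x‖ = 1 →
    fderivWithin ℝ u (closedBall (0 : EuclideanSpace ℝ (Fin N)) 1) x x = β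

/-- The set of voltages `λ > 0` for which `(P)_{λ,α,β}` admits a classical solution;
the pull-in voltage `λ*(α,β)` is its supremum. -/
def solSetAB (N : ℕ) (α β : ℝ) : Set ℝ :=
  {lam | 0 < lam ∧ ∃ u, IsClassicalSolutionAB N lam α β u}

/-!
Pair the equation with a fixed nonnegative bump function `φ` supported in the domain. Since
`α ≤ u < 1`, Green's identity gives
`λ (1 - α)⁻² ∫ φ ≤ ∫ (Δ² u) φ = ∫ u Δ² φ ≤ max |α| 1 * ∫ |Δ² φ|`,
which bounds `λ`. As `φ` has compact support, no boundary terms appear.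
-/

section IntegrationByParts

lemma integrable_mul_of_tsupport_subset {X : Type*} [TopologicalSpace X] [MeasurableSpace X]
    [OpensMeasurableSpace X] {μ : Measure X} [IsFiniteMeasureOnCompacts μ] {Ω : Set X}
    {f g : X → ℝ} (hf : ContinuousOn f Ω)
    (hg : Continuous g) (hgc : HasCompactSupport g) (hgΩ : tsupport g ⊆ Ω) :
    Integrable (fun x => f x * g x) μ := by
  have hint : IntegrableOn (fun x => f x * g x) (tsupport g) μ :=
    ((hf.mono hgΩ).mul hg.continuousOn).integrableOn_compact' hgc
      (isClosed_tsupport g).measurableSet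
  exact (integrableOn_iff_integrable_of_support_subset
    ((Function.support_mul_subset_right f g).trans (subset_tsupport g))).1 hint

variable {E : Type*} [NormedAddCommGroup E] [NormedSpace ℝ E] [FiniteDimensional ℝ E]
  [MeasurableSpace E] [BorelSpace E] {μ : Measure E} [μ.IsAddHaarMeasure] {Ω : Set E} {f g : E → ℝ}

lemma integral_mul_fderiv_of_tsupport_subset (hΩ : IsOpen Ω) (hf : ContDiffOn ℝ 1 f Ω)
    (hg : ContDiff ℝ 1 g) (hgc : HasCompactSupport g) (hgΩ : tsupport g ⊆ Ω) (v : E) :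
    ∫ x, f x * fderiv ℝ g x v ∂μ = -∫ x, fderiv ℝ f x v * g x ∂μ := by
  have hf' : ContinuousOn (fun x => fderiv ℝ f x v) Ω :=
    (hf.continuousOn_fderiv_of_isOpen hΩ le_rfl).clm_apply continuousOn_const
  have hg' : Continuous (fun x => fderiv ℝ g x v) :=
    (hg.continuous_fderiv one_ne_zero).clm_apply continuous_const
  have hg'Ω : tsupport (fun x => fderiv ℝ g x v) ⊆ Ω :=
    (tsupport_fderiv_apply_subset ℝ v).trans hgΩ
  exact integral_mul_fderiv_eq_neg_fderiv_mul_of_integrable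
    (integrable_mul_of_tsupport_subset hf' hg.continuous hgc hgΩ)
    (integrable_mul_of_tsupport_subset hf.continuousOn hg' (hgc.fderiv_apply ℝ v) hg'Ω)
    (integrable_mul_of_tsupport_subset hf.continuousOn hg.continuous hgc hgΩ)
    (fun x hx => (hf.differentiableOn one_ne_zero).differentiableAt (hΩ.mem_nhds (hgΩ hx)))
    (fun x _ => hg.differentiable one_ne_zero x)

lemma integral_mul_fderiv_fderiv_of_tsupport_subset (hΩ : IsOpen Ω) (hf : ContDiffOn ℝ 2 f Ω)
    (hg : ContDiff ℝ 2 g) (hgc : HasCompactSupport g) (hgΩ : tsupport g ⊆ Ω) (v w : E) :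
    ∫ x, f x * fderiv ℝ (fun y => fderiv ℝ g y v) x w ∂μ =
      ∫ x, fderiv ℝ (fun y => fderiv ℝ f y w) x v * g x ∂μ := by
  have one_add_one_le : (1 : WithTop ℕ∞) + 1 ≤ 2 := one_add_one_eq_two.le
  have hf' : ContDiffOn ℝ 1 (fun y => fderiv ℝ f y w) Ω :=
    (hf.fderiv_of_isOpen hΩ one_add_one_le).clm_apply contDiffOn_const
  have hg' : ContDiff ℝ 1 (fun y => fderiv ℝ g y v) :=
    (hg.fderiv_right one_add_one_le).clm_apply contDiff_const
  rw [integral_mul_fderiv_of_tsupport_subset hΩ (hf.of_le one_le_two) hg'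
      (hgc.fderiv_apply ℝ v) ((tsupport_fderiv_apply_subset ℝ v).trans hgΩ) w,
    integral_mul_fderiv_of_tsupport_subset hΩ hf' (hg.of_le one_le_two) hgc hgΩ v, neg_neg]

end IntegrationByParts

section Laplacian

variable {N : ℕ} {Ω : Set (EuclideanSpace ℝ (Fin N))} {f g u φ : EuclideanSpace ℝ (Fin N) → ℝ}

lemma contDiffOn_lap {m n : WithTop ℕ∞} (hΩ : IsOpen Ω) (hu : ContDiffOn ℝ n u Ω)
    (hmn : m + 1 + 1 ≤ n) : ContDiffOn ℝ m (lap u) Ω :=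
  ContDiffOn.sum fun _ _ =>
    (((hu.fderiv_of_isOpen hΩ hmn).clm_apply contDiffOn_const).fderiv_of_isOpen hΩ
      le_rfl).clm_apply contDiffOn_const

lemma contDiff_lap {m n : WithTop ℕ∞} (hu : ContDiff ℝ n u) (hmn : m + 1 + 1 ≤ n) :
    ContDiff ℝ m (lap u) :=
  contDiffOn_univ.1 (contDiffOn_lap isOpen_univ hu.contDiffOn hmn)

lemma continuousOn_biharm (hΩ : IsOpen Ω) (hu : ContDiffOn ℝ 4 u Ω) :
    ContinuousOn (biharm u) Ω :=
  have hlap : ContDiffOn ℝ 2 (lap u) Ω := contDiffOn_lap hΩ hu (by norm_num)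
  (contDiffOn_lap (m := 0) hΩ hlap (by norm_num)).continuousOn

lemma continuous_biharm (hu : ContDiff ℝ 4 u) : Continuous (biharm u) :=
  continuousOn_univ.1 (continuousOn_biharm isOpen_univ hu.contDiffOn)

lemma tsupport_lap_subset (u : EuclideanSpace ℝ (Fin N) → ℝ) :
    tsupport (lap u) ⊆ tsupport u := by
  refine closure_minimal (fun x hx => ?_) (isClosed_tsupport u)
  obtain ⟨i, -, hi⟩ := Finset.exists_ne_zero_of_sum_ne_zero hx
  exact tsupport_fderiv_apply_subset ℝ _
    (tsupport_fderiv_apply_subset ℝ _ (subset_tsupport _ hi))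

lemma tsupport_biharm_subset (u : EuclideanSpace ℝ (Fin N) → ℝ) :
    tsupport (biharm u) ⊆ tsupport u :=
  (tsupport_lap_subset (lap u)).trans (tsupport_lap_subset u)

lemma hasCompactSupport_lap (hu : HasCompactSupport u) : HasCompactSupport (lap u) :=
  hu.of_isClosed_subset (isClosed_tsupport _) (tsupport_lap_subset u)

lemma hasCompactSupport_biharm (hu : HasCompactSupport u) : HasCompactSupport (biharm u) :=
  hasCompactSupport_lap (hasCompactSupport_lap hu)

lemma integral_mul_lap (hΩ : IsOpen Ω) (hf : ContDiffOn ℝ 2 f Ω) (hg : ContDiff ℝ 2 g)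
    (hgc : HasCompactSupport g) (hgΩ : tsupport g ⊆ Ω) :
    ∫ x, f x * lap g x = ∫ x, lap f x * g x := by
  have one_add_one_le : (1 : WithTop ℕ∞) + 1 ≤ 2 := one_add_one_eq_two.le
  let e (i : Fin N) : EuclideanSpace ℝ (Fin N) := EuclideanSpace.single i 1
  have hf_int (i : Fin N) :
      Integrable (fun x => fderiv ℝ (fun y => fderiv ℝ f y (e i)) x (e i) * g x) := by
    have hf' : ContDiffOn ℝ 1 (fun y => fderiv ℝ f y (e i)) Ω :=
      (hf.fderiv_of_isOpen hΩ one_add_one_le).clm_apply contDiffOn_const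
    exact integrable_mul_of_tsupport_subset
      ((hf'.continuousOn_fderiv_of_isOpen hΩ le_rfl).clm_apply continuousOn_const)
      hg.continuous hgc hgΩ
  have hg_int (i : Fin N) :
      Integrable (fun x => f x * fderiv ℝ (fun y => fderiv ℝ g y (e i)) x (e i)) := by
    have hg' : ContDiff ℝ 1 (fun y => fderiv ℝ g y (e i)) :=
      (hg.fderiv_right one_add_one_le).clm_apply contDiff_const
    exact integrable_mul_of_tsupport_subset hf.continuousOn
      ((hg'.continuous_fderiv one_ne_zero).clm_apply continuous_const)
      ((hgc.fderiv_apply ℝ _).fderiv_apply ℝ _)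
      (((tsupport_fderiv_apply_subset ℝ _).trans (tsupport_fderiv_apply_subset ℝ _)).trans hgΩ)
  simp only [lap, Finset.mul_sum, Finset.sum_mul]
  rw [integral_finsetSum _ fun i _ => hg_int i, integral_finsetSum _ fun i _ => hf_int i]
  exact Finset.sum_congr rfl fun i _ =>
    integral_mul_fderiv_fderiv_of_tsupport_subset hΩ hf hg hgc hgΩ (e i) (e i)

lemma integral_mul_biharm (hΩ : IsOpen Ω) (hu : ContDiffOn ℝ 4 u Ω) (hφ : ContDiff ℝ 4 φ)
    (hφc : HasCompactSupport φ) (hφΩ : tsupport φ ⊆ Ω) :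
    ∫ x, u x * biharm φ x = ∫ x, biharm u x * φ x := by
  have two_le_four : (2 : WithTop ℕ∞) ≤ 4 := by norm_num
  have two_add_le : (2 : WithTop ℕ∞) + 1 + 1 ≤ 4 := by norm_num
  calc ∫ x, u x * biharm φ x = ∫ x, lap u x * lap φ x :=
        integral_mul_lap hΩ (hu.of_le two_le_four) (contDiff_lap hφ two_add_le)
          (hasCompactSupport_lap hφc) ((tsupport_lap_subset φ).trans hφΩ)
    _ = ∫ x, biharm u x * φ x :=
        integral_mul_lap hΩ (contDiffOn_lap hΩ hu two_add_le) (hφ.of_le two_le_four) hφc hφΩ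

lemma mul_integral_le_mul_integral_abs_biharm {c M : ℝ} (hΩ : IsOpen Ω)
    (hu : ContDiffOn ℝ 4 u Ω) (huM : ∀ x ∈ Ω, |u x| ≤ M) (huc : ∀ x ∈ Ω, c ≤ biharm u x)
    (hφ : ContDiff ℝ 4 φ) (hφc : HasCompactSupport φ) (hφΩ : tsupport φ ⊆ Ω)
    (hφ_nonneg : ∀ x, 0 ≤ φ x) :
    c * ∫ x, φ x ≤ M * ∫ x, |biharm φ x| := by
  have hbi := continuous_biharm hφ
  have hbic := hasCompactSupport_biharm hφc
  have hbiΩ := (tsupport_biharm_subset φ).trans hφΩ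
  have lower (x) : c * φ x ≤ biharm u x * φ x := by
    by_cases hx : x ∈ tsupport φ
    · exact mul_le_mul_of_nonneg_right (huc x (hφΩ hx)) (hφ_nonneg x)
    · simp [image_eq_zero_of_notMem_tsupport hx]
  have upper (x) : u x * biharm φ x ≤ M * |biharm φ x| := by
    by_cases hx : x ∈ tsupport (biharm φ)
    · calc u x * biharm φ x ≤ |u x| * |biharm φ x| := (le_abs_self _).trans (abs_mul _ _).le
        _ ≤ M * |biharm φ x| := mul_le_mul_of_nonneg_right (huM x (hbiΩ hx)) (abs_nonneg _)
    · simp [image_eq_zero_of_notMem_tsupport hx]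
  calc c * ∫ x, φ x = ∫ x, c * φ x := (integral_const_mul _ _).symm
    _ ≤ ∫ x, biharm u x * φ x :=
        integral_mono ((hφ.continuous.integrable_of_hasCompactSupport hφc).const_mul c)
          (integrable_mul_of_tsupport_subset (continuousOn_biharm hΩ hu) hφ.continuous hφc hφΩ)
          lower
    _ = ∫ x, u x * biharm φ x := (integral_mul_biharm hΩ hu hφ hφc hφΩ).symm
    _ ≤ ∫ x, M * |biharm φ x| :=
        integral_mono (integrable_mul_of_tsupport_subset hu.continuousOn hbi hbic hbiΩ)
          ((hbi.integrable_of_hasCompactSupport hbic).abs.const_mul M) upper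
    _ = M * ∫ x, |biharm φ x| := integral_const_mul _ _

lemma exists_le_mul_of_le_biharm (hΩ : IsOpen Ω) (hne : Ω.Nonempty) :
    ∃ K : ℝ, ∀ (u : EuclideanSpace ℝ (Fin N) → ℝ) (c M : ℝ), ContDiffOn ℝ 4 u Ω →
      (∀ x ∈ Ω, |u x| ≤ M) → (∀ x ∈ Ω, c ≤ biharm u x) → c ≤ M * K := by
  obtain ⟨x₀, hx₀⟩ := hne
  obtain ⟨φ, hφΩ, hφc, hφ, hφ_range, hφx₀⟩ :=
    exists_contDiff_tsupport_subset (n := 4) (hΩ.mem_nhds hx₀)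
  have hφ_nonneg (x) : 0 ≤ φ x := (hφ_range (mem_range_self x)).1
  have hφ_pos : 0 < ∫ x, φ x :=
    hφ.continuous.integral_pos_of_hasCompactSupport_nonneg_nonzero hφc hφ_nonneg
      (hφx₀.trans_ne one_ne_zero)
  refine ⟨(∫ x, |biharm φ x|) / ∫ x, φ x, fun u c M hu huM huc => ?_⟩
  rw [← mul_div_assoc, le_div_iff₀ hφ_pos]
  exact mul_integral_le_mul_integral_abs_biharm hΩ hu huM huc hφ hφc hφΩ hφ_nonneg

end Laplacian

theorem pullInAB_finite_general {N : ℕ} {Ω : Set (EuclideanSpace ℝ (Fin N))} (hΩ : IsOpen Ω)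
    (hne : Ω.Nonempty) (α : ℝ) :
    BddAbove {lam : ℝ | 0 < lam ∧ ∃ u : EuclideanSpace ℝ (Fin N) → ℝ, ContDiffOn ℝ 4 u Ω ∧
      (∀ x ∈ Ω, α ≤ u x ∧ u x < 1) ∧ ∀ x ∈ Ω, lam / (1 - u x) ^ 2 ≤ biharm u x} := by
  obtain ⟨K, hK⟩ := exists_le_mul_of_le_biharm hΩ hne
  refine ⟨max |α| 1 * K * (1 - α) ^ 2, ?_⟩
  rintro lam ⟨hlam, u, hu, hu_range, hu_super⟩
  obtain ⟨x₀, hx₀⟩ := hne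
  have hα : 0 < 1 - α := sub_pos.2 ((hu_range x₀ hx₀).1.trans_lt (hu_range x₀ hx₀).2)
  have hu_abs : ∀ x ∈ Ω, |u x| ≤ max |α| 1 := fun x hx =>
    (abs_le_max_abs_abs (hu_range x hx).1 (hu_range x hx).2.le).trans_eq (by rw [abs_one])
  have hu_biharm : ∀ x ∈ Ω, lam / (1 - α) ^ 2 ≤ biharm u x := by
    intro x hx
    obtain ⟨hαu, hu1⟩ := hu_range x hx
    have : 0 < 1 - u x := sub_pos.2 hu1
    refine le_trans ?_ (hu_super x hx)
    gcongr
  exact (div_le_iff₀ (pow_pos hα 2)).1 (hK u _ _ hu hu_abs hu_biharm)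

/-- for an admissible pair `(α, β)` the pull-in voltage `λ*(α,β)` is finite,
i.e. the set of voltages admitting a classical solution is bounded above. -/
theorem pullInAB_finite (N : ℕ) (α β : ℝ) (hadm : Admissible α β) :
    BddAbove (solSetAB N α β) := by
  refine BddAbove.mono ?_ (pullInAB_finite_general
    (Ω := ball (0 : EuclideanSpace ℝ (Fin N)) 1) isOpen_ball (nonempty_ball.2 one_pos) α)
  exact fun lam ⟨hlam, u, hu⟩ => ⟨hlam, u, hu.contDiffOn.mono ball_subset_closedBall,
    fun x hx => ⟨(hu.gt_alpha x hx).le, hu.lt_one x hx⟩, fun x hx => (hu.eqn x hx).ge⟩
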